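/- Assume m ≥ 2. Let Û₁ : H → H × H be Û₁ b = (W₁ b + λ₁ b, η₁ b), set â_{1,n} = sup_{p ∈ ℕ} (β_{1,n,p} + β̃_{1,n,p})² + η_{1,n}² for n ∈ {1, …, m−1} and â_{1,m} = sup_{p ∈ ℕ} (β_{1,m,p} + β̃_{1,m,p})², define ā_{i,m} = sup_{p ∈ ℕ} ( β_{i,m,p}² + β̃_{i,m,p}² ), and define recursively θ̂_n = √(â_{1,n}) + Σ_{i=2}^n θ̂_{i−1} √(a_{i,n}) for n = 1, …, m−1 and θ̂_m = √(â_{1,m}) + Σ_{i=2}^m θ̂_{i−1} √(ā_{i,m}). Let α ∈ [1/2, 1] and define b̂_α = sup_{p ∈ ℕ} ( β_{1,m,p} + β̃_{1,m,p} − 2^m (1 − α) )². Let Ū_m(x, b) = W_m x + λ_m b and N̂ = R_m ∘ Ū_m ∘ Q_{m−1} ∘ U_{m−1} ∘ ⋯ ∘ Q_1 ∘ Û₁ : H → H. If √(b̂_α) − √(â_{1,m}) ≤ 2^m α − 2 θ̂_m, then N̂ is α-averaged. -/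

import Mathlib

/-!
Write each layer as `Rₙ = (Id + Tₙ) / 2` with `Tₙ` nonexpansive, and let `Gₙ` be `2ⁿ` times the
difference of the outputs of layer `n` of the network on two inputs `x`, `y`. Then
`Gₙ = Uₙ Gₙ₋₁ + Sₙ` where `‖Sₙ‖ ≤ ‖Uₙ Gₙ₋₁‖`, and unfolding this recursion (`unfold_rec`) gives
`Uₙ Gₙ₋₁ = Uₙ ⋯ U₁ (d, d) + ∑_{i=2}^n Uₙ ⋯ Uᵢ Sᵢ₋₁` with `d = x - y`, because `Û₁ d = U₁ (d, d)`.

In the basis `v`, the composition `Uₙ ⋯ Uᵢ` is block diagonal with blocks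
`!![β_{i,n,p}, β̃_{i,n,p}; 0, η_{i,n}]`. The number inside the supremum defining `2 a_{i,n}` is
twice the largest eigenvalue of the Gram matrix of this block (`gram_bound`), hence
`‖Uₙ ⋯ Uᵢ‖² ≤ a_{i,n}`, and the other constants are bounds of the same type for the first
component or for vectors on the diagonal. By induction `‖Uₙ Gₙ₋₁‖ ≤ θ̂ₙ ‖d‖`. In the last layer,
subtracting `2ᵐ (1 - α) d` only affects the leading term `Uₘ ⋯ U₁ (d, d)`, whose first component
then has norm at most `√b̂_α ‖d‖`; so
`‖2ᵐ (N̂ x - N̂ y) - 2ᵐ (1 - α) d‖ ≤ (√b̂_α - √â_{1,m} + 2 θ̂ₘ) ‖d‖ ≤ 2ᵐ α ‖d‖`.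
-/

noncomputable section

open Finset

variable {H : Type*} [NormedAddCommGroup H] [InnerProductSpace ℝ H]

/-- Build the pair `(x, b)` in the `ℓ²` product space `H × H`. -/
def mkP (x b : H) : WithLp 2 (H × H) := (WithLp.equiv 2 (H × H)).symm (x, b)

/-- First component of an element of the product space. -/
def fstP (z : WithLp 2 (H × H)) : H := (WithLp.equiv 2 (H × H) z).1

/-- Second component of an element of the product space. -/
def sndP (z : WithLp 2 (H × H)) : H := (WithLp.equiv 2 (H × H) z).2

/-- `(x, b) ↦ x` as a continuous linear map on the `ℓ²` product. -/
def fstL : WithLp 2 (H × H) →L[ℝ] H :=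
  (ContinuousLinearMap.fst ℝ H H).comp
    (WithLp.prodContinuousLinearEquiv 2 ℝ H H).toContinuousLinearMap

/-- `(x, b) ↦ b` as a continuous linear map on the `ℓ²` product. -/
def sndL : WithLp 2 (H × H) →L[ℝ] H :=
  (ContinuousLinearMap.snd ℝ H H).comp
    (WithLp.prodContinuousLinearEquiv 2 ℝ H H).toContinuousLinearMap

/-- `Uₙ(x, b) = (Wₙ x + λₙ b, ηₙ b)` as a continuous linear map on the product space. -/
def Uop (W : ℕ → H →L[ℝ] H) (lam eta : ℕ → ℝ) (n : ℕ) :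
    WithLp 2 (H × H) →L[ℝ] WithLp 2 (H × H) :=
  ((WithLp.prodContinuousLinearEquiv 2 ℝ H H).symm.toContinuousLinearMap).comp
    (((((W n).comp (ContinuousLinearMap.fst ℝ H H)) + lam n • (ContinuousLinearMap.snd ℝ H H)).prod
        (eta n • (ContinuousLinearMap.snd ℝ H H))).comp
      (WithLp.prodContinuousLinearEquiv 2 ℝ H H).toContinuousLinearMap)

/-- Composition `Aₙ ∘ ⋯ ∘ Aᵢ` (the identity when `n < i`, i.e. when the composition is empty). -/
def opComp {E : Type*} [NormedAddCommGroup E] [NormedSpace ℝ E]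
    (A : ℕ → E →L[ℝ] E) (i : ℕ) : ℕ → (E →L[ℝ] E)
  | 0 => 1
  | n + 1 => if n + 1 < i then 1 else (A (n + 1)).comp (opComp A i n)

/-- `η_{i,j} = η_j ⋯ η_i` if `j ≥ i`, and `1` otherwise. -/
def etaP (eta : ℕ → ℝ) (i j : ℕ) : ℝ := ∏ k ∈ Finset.Icc i j, eta k

/-- `β_{i,n,p} = ∏_{j=i}^n β_p^{(j)}`. -/
def betaC (beta : ℕ → ℕ → ℝ) (i n p : ℕ) : ℝ := ∏ j ∈ Finset.Icc i n, beta j p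

/-- `β̃_{i,n,p} = Σ_{j=i}^{n−1} (∏_{l=j+1}^n β_p^{(l)}) λ_j η_{i,j−1} + λ_n η_{i,n−1}`. -/
def betaT (beta : ℕ → ℕ → ℝ) (lam eta : ℕ → ℝ) (i n p : ℕ) : ℝ :=
  (∑ j ∈ Finset.Icc i (n - 1), (∏ l ∈ Finset.Icc (j + 1) n, beta l p) * lam j * etaP eta i (j - 1))
    + lam n * etaP eta i (n - 1)

/-- The operator `W̃_{i,n} = Σ_{j=i}^{n−1} λ_j η_{i,j−1} (Wₙ ∘ ⋯ ∘ W_{j+1}) + λ_n η_{i,n−1} Id`. -/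
def Wt (W : ℕ → H →L[ℝ] H) (lam eta : ℕ → ℝ) (i n : ℕ) : H →L[ℝ] H :=
  (∑ j ∈ Finset.Icc i (n - 1), (lam j * etaP eta i (j - 1)) • opComp W (j + 1) n)
    + (lam n * etaP eta i (n - 1)) • (1 : H →L[ℝ] H)

/-- `a_{i,n}`. -/
def aC (beta : ℕ → ℕ → ℝ) (lam eta : ℕ → ℝ) (i n : ℕ) : ℝ :=
  (1 / 2) * ⨆ p : ℕ,
    (betaC beta i n p ^ 2 + betaT beta lam eta i n p ^ 2 + etaP eta i n ^ 2
      + Real.sqrt ((betaC beta i n p ^ 2 + betaT beta lam eta i n p ^ 2 + etaP eta i n ^ 2) ^ 2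
          - 4 * betaC beta i n p ^ 2 * etaP eta i n ^ 2))

/-- `ā_{i,n} = sup_p (β_{i,n,p}² + β̃_{i,n,p}²)`. -/
def aBar (beta : ℕ → ℕ → ℝ) (lam eta : ℕ → ℝ) (i n : ℕ) : ℝ :=
  ⨆ p : ℕ, (betaC beta i n p ^ 2 + betaT beta lam eta i n p ^ 2)

/-- `Qₙ(x, b) = (Rₙ x, b)`. -/
def Qop (R : ℕ → H → H) (n : ℕ) (z : WithLp 2 (H × H)) : WithLp 2 (H × H) :=
  mkP (R n (fstP z)) (sndP z)

/-- The virtual network `Qₙ ∘ Uₙ ∘ ⋯ ∘ Q₁ ∘ U₁`. -/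
def net (U : ℕ → WithLp 2 (H × H) →L[ℝ] WithLp 2 (H × H))
    (Q : ℕ → WithLp 2 (H × H) → WithLp 2 (H × H)) :
    ℕ → (WithLp 2 (H × H) → WithLp 2 (H × H))
  | 0 => id
  | n + 1 => fun z => Q (n + 1) (U (n + 1) (net U Q n z))

/-- `Ū_m (x, b) = W_m x + λ_m b` as a continuous linear map to `H`. -/
def Ubar (W : ℕ → H →L[ℝ] H) (lam : ℕ → ℝ) (m : ℕ) : WithLp 2 (H × H) →L[ℝ] H :=
  ((W m).comp fstL) + lam m • sndL

/-- `Û₁ b = (λ₁ b, η₁ b)`. -/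
def Uhat1a (lam eta : ℕ → ℝ) : H →L[ℝ] WithLp 2 (H × H) :=
  ((WithLp.prodContinuousLinearEquiv 2 ℝ H H).symm.toContinuousLinearMap).comp
    ((lam 1 • (1 : H →L[ℝ] H)).prod (eta 1 • (1 : H →L[ℝ] H)))

/-- `Û₁ b = (W₁ b + λ₁ b, η₁ b)`. -/
def Uhat1b (W : ℕ → H →L[ℝ] H) (lam eta : ℕ → ℝ) : H →L[ℝ] WithLp 2 (H × H) :=
  ((WithLp.prodContinuousLinearEquiv 2 ℝ H H).symm.toContinuousLinearMap).comp
    ((W 1 + lam 1 • (1 : H →L[ℝ] H)).prod (eta 1 • (1 : H →L[ℝ] H)))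

/-- The chain `Qₙ ∘ Uₙ ∘ ⋯ ∘ Q₂ ∘ U₂ ∘ Q₁ ∘ Û₁` (for `n ≥ 1`), fed with an input in `H`. -/
def midNet (U : ℕ → WithLp 2 (H × H) →L[ℝ] WithLp 2 (H × H))
    (Q : ℕ → WithLp 2 (H × H) → WithLp 2 (H × H)) (U1 : H → WithLp 2 (H × H)) :
    ℕ → (H → WithLp 2 (H × H))
  | 0 => U1
  | 1 => fun b => Q 1 (U1 b)
  | n + 2 => fun b => Q (n + 2) (U (n + 2) (midNet U Q U1 (n + 1) b))

/-! ### Scalar inequalities and boundedness -/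

/-- The largest eigenvalue of the Gram matrix of `!![β, t; 0, η]` bounds its quadratic form. -/
lemma gram_bound (β t η x b : ℝ) :
    (β * x + t * b) ^ 2 + (η * b) ^ 2 ≤
      (1 / 2) * (β ^ 2 + t ^ 2 + η ^ 2
        + Real.sqrt ((β ^ 2 + t ^ 2 + η ^ 2) ^ 2 - 4 * β ^ 2 * η ^ 2)) * (x ^ 2 + b ^ 2) := by
  have hD : (β ^ 2 + t ^ 2 + η ^ 2) ^ 2 - 4 * β ^ 2 * η ^ 2
      = (β ^ 2 - t ^ 2 - η ^ 2) ^ 2 + 4 * β ^ 2 * t ^ 2 := by ring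
  have hD0 : 0 ≤ (β ^ 2 - t ^ 2 - η ^ 2) ^ 2 + 4 * β ^ 2 * t ^ 2 := by positivity
  have hs := Real.sq_sqrt hD0
  have habs : |β ^ 2 - t ^ 2 - η ^ 2|
      ≤ Real.sqrt ((β ^ 2 - t ^ 2 - η ^ 2) ^ 2 + 4 * β ^ 2 * t ^ 2) :=
    Real.abs_le_sqrt (by nlinarith [mul_nonneg (sq_nonneg β) (sq_nonneg t)])
  rw [hD]
  set s := Real.sqrt ((β ^ 2 - t ^ 2 - η ^ 2) ^ 2 + 4 * β ^ 2 * t ^ 2)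
  obtain ⟨h1, h2⟩ := abs_le.1 habs
  -- `A`, `C` are the diagonal entries of `μ - Gram`, with `μ` the eigenvalue; its determinant is 0.
  obtain ⟨A, hA⟩ : ∃ A, A = (1 / 2) * (β ^ 2 + t ^ 2 + η ^ 2 + s) - β ^ 2 := ⟨_, rfl⟩
  obtain ⟨C, hC⟩ : ∃ C, C = (1 / 2) * (β ^ 2 + t ^ 2 + η ^ 2 + s) - (t ^ 2 + η ^ 2) := ⟨_, rfl⟩
  have hA0 : 0 ≤ A := by linarith
  have hC0 : 0 ≤ C := by linarith
  have hdet : A * C = (β * t) ^ 2 := by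
    rw [hA, hC]; linear_combination (1 / 4) * hs
  have key : 0 ≤ A * x ^ 2 - 2 * (β * t) * x * b + C * b ^ 2 := by
    rcases hA0.eq_or_lt with h | h
    · have hz : β * t = 0 := by
        rw [← h, zero_mul] at hdet
        exact pow_eq_zero_iff (two_ne_zero) |>.1 hdet.symm
      rw [hz, ← h]
      have := mul_nonneg hC0 (sq_nonneg b)
      linarith
    · refine nonneg_of_mul_nonneg_right (a := A) ?_ h
      have : A * (A * x ^ 2 - 2 * (β * t) * x * b + C * b ^ 2)
          = (A * x - β * t * b) ^ 2 := by linear_combination b ^ 2 * hdet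
      rw [this]; positivity
  rw [hA, hC] at key
  linarith

/-- Boundedness of a real sequence. -/
def BddSeq (f : ℕ → ℝ) : Prop := ∃ C, ∀ p, |f p| ≤ C

lemma BddSeq.const (c : ℝ) : BddSeq fun _ => c := ⟨|c|, fun _ => le_rfl⟩

lemma BddSeq.add {f g : ℕ → ℝ} (hf : BddSeq f) (hg : BddSeq g) : BddSeq fun p => f p + g p := by
  obtain ⟨C, hC⟩ := hf
  obtain ⟨D, hD⟩ := hg
  exact ⟨C + D, fun p => (abs_add_le _ _).trans (add_le_add (hC p) (hD p))⟩

lemma BddSeq.mul {f g : ℕ → ℝ} (hf : BddSeq f) (hg : BddSeq g) : BddSeq fun p => f p * g p := by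
  obtain ⟨C, hC⟩ := hf
  obtain ⟨D, hD⟩ := hg
  refine ⟨C * D, fun p => ?_⟩
  rw [abs_mul]
  exact mul_le_mul (hC p) (hD p) (abs_nonneg _) ((abs_nonneg _).trans (hC p))

lemma BddSeq.sq {f : ℕ → ℝ} (hf : BddSeq f) : BddSeq fun p => f p ^ 2 := by
  simpa only [pow_two] using hf.mul hf

lemma BddSeq.sum {s : Finset ℕ} {f : ℕ → ℕ → ℝ} (h : ∀ i ∈ s, BddSeq (f i)) :
    BddSeq fun p => ∑ i ∈ s, f i p := by
  induction s using Finset.induction_on with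
  | empty => simpa using BddSeq.const 0
  | insert a s ha ih =>
    simp only [Finset.sum_insert ha]
    exact (h a (Finset.mem_insert_self _ _)).add
      (ih fun i hi => h i (Finset.mem_insert_of_mem hi))

lemma BddSeq.prod {s : Finset ℕ} {f : ℕ → ℕ → ℝ} (h : ∀ i ∈ s, BddSeq (f i)) :
    BddSeq fun p => ∏ i ∈ s, f i p := by
  induction s using Finset.induction_on with
  | empty => simpa using BddSeq.const 1
  | insert a s ha ih =>
    simp only [Finset.prod_insert ha]
    exact (h a (Finset.mem_insert_self _ _)).mul
      (ih fun i hi => h i (Finset.mem_insert_of_mem hi))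

lemma BddSeq.bddAbove {f : ℕ → ℝ} (hf : BddSeq f) : BddAbove (Set.range f) := by
  obtain ⟨C, hC⟩ := hf
  exact ⟨C, by rintro _ ⟨p, rfl⟩; exact (le_abs_self _).trans (hC p)⟩

lemma bddSeq_betaC {beta : ℕ → ℕ → ℝ} {m i n : ℕ}
    (hb : ∀ n, 1 ≤ n → n ≤ m → BddSeq (beta n)) (hi : 1 ≤ i) (hn : n ≤ m) :
    BddSeq (betaC beta i n) :=
  BddSeq.prod fun j hj => by
    rw [Finset.mem_Icc] at hj
    exact hb j (by omega) (by omega)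

lemma bddSeq_betaT {beta : ℕ → ℕ → ℝ} {lam eta : ℕ → ℝ} {m i n : ℕ}
    (hb : ∀ n, 1 ≤ n → n ≤ m → BddSeq (beta n)) (hn : n ≤ m) :
    BddSeq (betaT beta lam eta i n) := by
  refine BddSeq.add (BddSeq.sum fun j hj => ?_) (BddSeq.const _)
  refine BddSeq.mul (BddSeq.mul (BddSeq.prod fun l hl => ?_) (BddSeq.const _)) (BddSeq.const _)
  rw [Finset.mem_Icc] at hl
  exact hb l (by omega) (by omega)

/-! ### Recursions in the last index -/

lemma etaP_succ (eta : ℕ → ℝ) {i n : ℕ} (h : i ≤ n + 1) :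
    etaP eta i (n + 1) = eta (n + 1) * etaP eta i n := by
  rw [etaP, Finset.prod_Icc_succ_top h, mul_comm, etaP]

lemma etaP_pred_self (eta : ℕ → ℝ) {i : ℕ} (h : 1 ≤ i) : etaP eta i (i - 1) = 1 := by
  rw [etaP, Finset.Icc_eq_empty (by omega), Finset.prod_empty]

lemma betaC_succ (beta : ℕ → ℕ → ℝ) {i n : ℕ} (p : ℕ) (h : i ≤ n + 1) :
    betaC beta i (n + 1) p = beta (n + 1) p * betaC beta i n p := by
  rw [betaC, Finset.prod_Icc_succ_top h, mul_comm, betaC]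

lemma betaT_self (beta : ℕ → ℕ → ℝ) (lam eta : ℕ → ℝ) {i : ℕ} (p : ℕ) (h : 1 ≤ i) :
    betaT beta lam eta i i p = lam i := by
  rw [betaT, etaP_pred_self eta h, Finset.Icc_eq_empty (by omega)]
  simp

lemma betaT_succ (beta : ℕ → ℕ → ℝ) (lam eta : ℕ → ℝ) {i n : ℕ} (p : ℕ)
    (hi : 1 ≤ i) (h : i ≤ n) :
    betaT beta lam eta i (n + 1) p
      = beta (n + 1) p * betaT beta lam eta i n p + lam (n + 1) * etaP eta i n := by
  obtain ⟨k, rfl⟩ : ∃ k, n = k + 1 := ⟨n - 1, by omega⟩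
  simp only [betaT, Nat.add_sub_cancel]
  rw [Finset.sum_Icc_succ_top h, mul_add, Finset.mul_sum]
  congr 2
  · refine Finset.sum_congr rfl fun j hj => ?_
    rw [Finset.mem_Icc] at hj
    rw [Finset.prod_Icc_succ_top (by omega : j + 1 ≤ k + 1 + 1)]
    ring
  · simp
    ring

lemma opComp_self {E : Type*} [NormedAddCommGroup E] [NormedSpace ℝ E]
    (A : ℕ → E →L[ℝ] E) {i : ℕ} (hi : 1 ≤ i) (z : E) : opComp A i i z = A i z := by
  obtain ⟨k, rfl⟩ : ∃ k, i = k + 1 := ⟨i - 1, by omega⟩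
  cases k <;> simp [opComp]

lemma opComp_succ {E : Type*} [NormedAddCommGroup E] [NormedSpace ℝ E]
    (A : ℕ → E →L[ℝ] E) {i n : ℕ} (h : i ≤ n + 1) (z : E) :
    opComp A i (n + 1) z = A (n + 1) (opComp A i n z) := by
  simp [opComp, Nat.not_lt.2 h]

/-- The unfolded form of `Gₙ = Uₙ Gₙ₋₁ + Sₙ`, where `Sₙ` is read off as `Gₙ - Uₙ Gₙ₋₁`. -/
lemma unfold_rec {E : Type*} [NormedAddCommGroup E] [NormedSpace ℝ E]
    (A : ℕ → E →L[ℝ] E) (G : ℕ → E) {n : ℕ} (hn : 1 ≤ n) :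
    A n (G (n - 1)) = opComp A 1 n (G 0)
      + ∑ i ∈ Finset.Icc 2 n, opComp A i n (G (i - 1) - A (i - 1) (G (i - 1 - 1))) := by
  induction n, hn using Nat.le_induction with
  | base => simp [opComp_self]
  | succ n hn ih =>
    rw [Finset.sum_Icc_succ_top (by omega), opComp_self A (by omega), opComp_succ A (by omega)]
    have : ∑ i ∈ Finset.Icc 2 n, opComp A i (n + 1) (G (i - 1) - A (i - 1) (G (i - 1 - 1)))
        = A (n + 1) (∑ i ∈ Finset.Icc 2 n,
            opComp A i n (G (i - 1) - A (i - 1) (G (i - 1 - 1)))) := by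
      rw [map_sum]
      refine Finset.sum_congr rfl fun i hi => ?_
      rw [Finset.mem_Icc] at hi
      exact opComp_succ A (by omega) _
    rw [this]
    simp only [Nat.add_sub_cancel]
    rw [map_sub, ih, map_add]
    abel

/-! ### Coordinates in the Hilbert basis -/

lemma sq_norm_zero (H : Type*) [NormedAddCommGroup H] : (0 : ℝ) = ‖(0 : H)‖ ^ 2 := by simp

lemma normP_sq (z : WithLp 2 (H × H)) : ‖z‖ ^ 2 = ‖fstL z‖ ^ 2 + ‖sndL z‖ ^ 2 :=
  WithLp.prod_norm_sq_eq_of_L2 z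

/-- An inequality between quadratic forms holds if it holds coordinatewise. -/
lemma norm_sq_le_of_coord (v : HilbertBasis ℕ ℝ H) {w w' x b : H} {a : ℝ}
    (h : ∀ p, inner ℝ (v p) w ^ 2 + inner ℝ (v p) w' ^ 2
      ≤ a * (inner ℝ (v p) x ^ 2 + inner ℝ (v p) b ^ 2)) :
    ‖w‖ ^ 2 + ‖w'‖ ^ 2 ≤ a * (‖x‖ ^ 2 + ‖b‖ ^ 2) := by
  have hs (y : H) : HasSum (fun p => inner ℝ (v p) y ^ 2) (‖y‖ ^ 2) := by
    simpa only [real_inner_self_eq_norm_sq, real_inner_comm, pow_two] using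
      v.hasSum_inner_mul_inner y y
  exact hasSum_le h ((hs w).add (hs w')) (((hs x).add (hs b)).mul_left a)

lemma inner_diag (v : HilbertBasis ℕ ℝ H) (A : H →L[ℝ] H) (c : ℕ → ℝ)
    (hA : ∀ p, A (v p) = c p • v p) (p : ℕ) (x : H) :
    inner ℝ (v p) (A x) = c p * inner ℝ (v p) x := by
  have : (innerSL ℝ (v p)).comp A = c p • innerSL ℝ (v p) := by
    refine ContinuousLinearMap.ext_on (s := Set.range v) ?_ ?_
    · exact Submodule.dense_iff_topologicalClosure_eq_top.2 v.dense_span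
    · rintro _ ⟨q, rfl⟩
      simp only [ContinuousLinearMap.comp_apply, innerSL_apply_apply, hA, inner_smul_right,
        smul_apply, smul_eq_mul]
      rcases eq_or_ne p q with rfl | hne
      · rfl
      · rw [v.orthonormal.2 hne]; simp
  simpa using congrArg (fun f : H →L[ℝ] ℝ => f x) this

lemma bddSeq_of_diag (v : HilbertBasis ℕ ℝ H) (A : H →L[ℝ] H) (c : ℕ → ℝ)
    (hA : ∀ p, A (v p) = c p • v p) : BddSeq c := by
  refine ⟨‖A‖, fun p => ?_⟩
  have h := A.le_opNorm (v p)
  rwa [hA, norm_smul, v.orthonormal.1 p, mul_one, mul_one, Real.norm_eq_abs] at h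

lemma fstL_Uop (W : ℕ → H →L[ℝ] H) (lam eta : ℕ → ℝ) (n : ℕ) (z : WithLp 2 (H × H)) :
    fstL (Uop W lam eta n z) = W n (fstL z) + lam n • sndL z := rfl

lemma sndL_Uop (W : ℕ → H →L[ℝ] H) (lam eta : ℕ → ℝ) (n : ℕ) (z : WithLp 2 (H × H)) :
    sndL (Uop W lam eta n z) = eta n • sndL z := rfl

lemma sndL_opComp (W : ℕ → H →L[ℝ] H) (lam eta : ℕ → ℝ) {i n : ℕ} (hi : 1 ≤ i) (hin : i ≤ n)
    (z : WithLp 2 (H × H)) :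
    sndL (opComp (Uop W lam eta) i n z) = etaP eta i n • sndL z := by
  induction n, hin using Nat.le_induction with
  | base => rw [opComp_self _ hi, sndL_Uop]; simp [etaP]
  | succ n hn ih => rw [opComp_succ _ (by omega), sndL_Uop, ih, etaP_succ _ (by omega), smul_smul]

lemma inner_fstL_opComp (v : HilbertBasis ℕ ℝ H) (W : ℕ → H →L[ℝ] H) (beta : ℕ → ℕ → ℝ)
    (lam eta : ℕ → ℝ) {m i n : ℕ}
    (hW : ∀ n, 1 ≤ n → n ≤ m → ∀ p : ℕ, W n (v p) = beta n p • v p)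
    (hi : 1 ≤ i) (hin : i ≤ n) (hn : n ≤ m) (z : WithLp 2 (H × H)) (p : ℕ) :
    inner ℝ (v p) (fstL (opComp (Uop W lam eta) i n z))
      = betaC beta i n p * inner ℝ (v p) (fstL z)
        + betaT beta lam eta i n p * inner ℝ (v p) (sndL z) := by
  induction n, hin using Nat.le_induction with
  | base =>
    rw [opComp_self _ hi, fstL_Uop, inner_add_right, inner_smul_right,
      inner_diag v _ _ (hW i hi hn), betaT_self _ _ _ _ hi]
    simp [betaC]
  | succ n hn' ih =>
    rw [opComp_succ _ (by omega), fstL_Uop, inner_add_right, inner_smul_right,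
      inner_diag v _ _ (hW (n + 1) (by omega) hn), sndL_opComp _ _ _ hi hn', inner_smul_right,
      ih (by omega), betaC_succ _ _ (by omega), betaT_succ _ _ _ _ hi hn']
    ring

/-! ### Norm bounds for the compositions `Uₙ ⋯ Uᵢ` -/

section bounds

variable (v : HilbertBasis ℕ ℝ H) (W : ℕ → H →L[ℝ] H) (beta : ℕ → ℕ → ℝ)
    (lam eta : ℕ → ℝ) {m i n : ℕ}

lemma le_sqrt_mul {x y a : ℝ} (hy : 0 ≤ y) (h : x ^ 2 ≤ a * y ^ 2) : x ≤ Real.sqrt a * y := by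
  rw [← Real.sqrt_sq hy, ← Real.sqrt_mul' a (sq_nonneg y)]
  exact Real.le_sqrt_of_sq_le h

lemma bdd_beta
    (hW : ∀ n, 1 ≤ n → n ≤ m → ∀ p : ℕ, W n (v p) = beta n p • v p)
    : ∀ n, 1 ≤ n → n ≤ m → BddSeq (beta n) :=
  fun n h1 h2 => bddSeq_of_diag v (W n) (beta n) (hW n h1 h2)

lemma norm_opComp_le
    (hW : ∀ n, 1 ≤ n → n ≤ m → ∀ p : ℕ, W n (v p) = beta n p • v p)
    (hi : 1 ≤ i) (hin : i ≤ n) (hn : n ≤ m) (z : WithLp 2 (H × H)) :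
    ‖opComp (Uop W lam eta) i n z‖ ≤ Real.sqrt (aC beta lam eta i n) * ‖z‖ := by
  refine le_sqrt_mul (norm_nonneg _) ?_
  rw [normP_sq, normP_sq]
  refine norm_sq_le_of_coord v fun p => ?_
  rw [inner_fstL_opComp v W beta lam eta hW hi hin hn, sndL_opComp _ _ _ hi hin, inner_smul_right]
  refine (gram_bound _ _ _ _ _).trans (mul_le_mul_of_nonneg_right ?_ (by positivity))
  rw [aC]
  refine mul_le_mul_of_nonneg_left (le_ciSup (f := fun p =>
    betaC beta i n p ^ 2 + betaT beta lam eta i n p ^ 2 + etaP eta i n ^ 2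
      + Real.sqrt ((betaC beta i n p ^ 2 + betaT beta lam eta i n p ^ 2 + etaP eta i n ^ 2) ^ 2
          - 4 * betaC beta i n p ^ 2 * etaP eta i n ^ 2)) ?_ p) (by norm_num)
  have hC := bddSeq_betaC (bdd_beta v W beta hW) hi hn
  have hT := bddSeq_betaT (lam := lam) (eta := eta) (i := i) (bdd_beta v W beta hW) hn
  have hS := ((hC.sq.add hT.sq).add (BddSeq.const (etaP eta i n ^ 2)))
  obtain ⟨D, hD⟩ := (hS.add hS).bddAbove
  refine ⟨D, ?_⟩
  rintro _ ⟨q, rfl⟩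
  refine le_trans ?_ (hD ⟨q, rfl⟩)
  refine add_le_add_right ?_ _
  refine Real.sqrt_le_iff.2 ⟨by positivity, ?_⟩
  have : 0 ≤ 4 * betaC beta i n q ^ 2 * etaP eta i n ^ 2 := by positivity
  linarith

lemma norm_fst_opComp_le
    (hW : ∀ n, 1 ≤ n → n ≤ m → ∀ p : ℕ, W n (v p) = beta n p • v p)
    (hi : 1 ≤ i) (hin : i ≤ n) (hn : n ≤ m) (z : WithLp 2 (H × H)) :
    ‖fstL (opComp (Uop W lam eta) i n z)‖ ≤ Real.sqrt (aBar beta lam eta i n) * ‖z‖ := by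
  refine le_sqrt_mul (norm_nonneg _) ?_
  rw [normP_sq z, ← add_zero (‖_‖ ^ 2), sq_norm_zero H]
  refine norm_sq_le_of_coord v fun p => ?_
  rw [inner_fstL_opComp v W beta lam eta hW hi hin hn, inner_zero_right, zero_pow two_ne_zero,
    add_zero]
  have hC := bddSeq_betaC (bdd_beta v W beta hW) hi hn
  have hT := bddSeq_betaT (lam := lam) (eta := eta) (i := i) (bdd_beta v W beta hW) hn
  refine le_trans ?_ (mul_le_mul_of_nonneg_right
    (le_ciSup (hC.sq.add hT.sq).bddAbove p) (by positivity))
  set x := inner ℝ (v p) (fstL z)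
  set b := inner ℝ (v p) (sndL z)
  nlinarith [sq_nonneg (betaC beta i n p * b - betaT beta lam eta i n p * x)]

lemma norm_opComp_diag_le
    (hW : ∀ n, 1 ≤ n → n ≤ m → ∀ p : ℕ, W n (v p) = beta n p • v p)
    (h1n : 1 ≤ n) (hn : n ≤ m) (d : H) :
    ‖opComp (Uop W lam eta) 1 n (mkP d d)‖ ≤ Real.sqrt (⨆ p : ℕ,
      ((betaC beta 1 n p + betaT beta lam eta 1 n p) ^ 2 + etaP eta 1 n ^ 2)) * ‖d‖ := by
  refine le_sqrt_mul (norm_nonneg _) ?_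
  rw [normP_sq, ← add_zero (‖d‖ ^ 2), sq_norm_zero H]
  refine norm_sq_le_of_coord v fun p => ?_
  rw [inner_fstL_opComp v W beta lam eta hW le_rfl h1n hn, sndL_opComp _ _ _ le_rfl h1n,
    inner_smul_right, inner_zero_right, zero_pow two_ne_zero, add_zero]
  have hC := bddSeq_betaC (bdd_beta v W beta hW) le_rfl hn
  have hT := bddSeq_betaT (lam := lam) (eta := eta) (i := 1) (bdd_beta v W beta hW) hn
  refine le_trans (le_of_eq ?_) (mul_le_mul_of_nonneg_right
    (le_ciSup ((hC.add hT).sq.add (BddSeq.const (etaP eta 1 n ^ 2))).bddAbove p) (by positivity))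
  change (_ * inner ℝ (v p) d + _ * inner ℝ (v p) d) ^ 2 + (_ * inner ℝ (v p) d) ^ 2 = _
  ring

lemma norm_fst_opComp_diag_sub_le
    (hW : ∀ n, 1 ≤ n → n ≤ m → ∀ p : ℕ, W n (v p) = beta n p • v p)
    (h1n : 1 ≤ n) (hn : n ≤ m) (c : ℝ) (d : H) :
    ‖fstL (opComp (Uop W lam eta) 1 n (mkP d d)) - c • d‖ ≤ Real.sqrt (⨆ p : ℕ,
      (betaC beta 1 n p + betaT beta lam eta 1 n p - c) ^ 2) * ‖d‖ := by
  refine le_sqrt_mul (norm_nonneg _) ?_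
  have key : ‖fstL (opComp (Uop W lam eta) 1 n (mkP d d)) - c • d‖ ^ 2 + ‖(0 : H)‖ ^ 2
      ≤ (⨆ p : ℕ, (betaC beta 1 n p + betaT beta lam eta 1 n p - c) ^ 2)
        * (‖d‖ ^ 2 + ‖(0 : H)‖ ^ 2) := by
    refine norm_sq_le_of_coord v fun p => ?_
    rw [inner_sub_right, inner_fstL_opComp v W beta lam eta hW le_rfl h1n hn,
      inner_smul_right, inner_zero_right, zero_pow two_ne_zero, add_zero, add_zero]
    have hC := bddSeq_betaC (bdd_beta v W beta hW) le_rfl hn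
    have hT := bddSeq_betaT (lam := lam) (eta := eta) (i := 1) (bdd_beta v W beta hW) hn
    refine le_trans (le_of_eq ?_) (mul_le_mul_of_nonneg_right
      (le_ciSup ((hC.add hT).add (BddSeq.const (-c))).sq.bddAbove p) (by positivity))
    change (_ * inner ℝ (v p) d + _ * inner ℝ (v p) d - _) ^ 2 = _
    ring
  simpa using key

end bounds

/-! ### The network -/

/-- The reflection `2 R - Id` of a firmly nonexpansive map is nonexpansive. -/
lemma norm_reflect_le {a c : H} (h : ‖a‖ ^ 2 + ‖c - a‖ ^ 2 ≤ ‖c‖ ^ 2) :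
    ‖(2 : ℝ) • a - c‖ ≤ ‖c‖ := by
  have h2 := parallelogram_law_with_norm ℝ a (c - a)
  have e1 : a + (c - a) = c := by abel
  have e2 : a - (c - a) = (2 : ℝ) • a - c := by rw [two_smul]; abel
  rw [e1, e2] at h2
  exact le_of_sq_le_sq (by nlinarith) (norm_nonneg _)

/-- `Û₁ b = U₁ (b, b)`, so the network fed through `Û₁` is the network `net` on the diagonal. -/
lemma midNet_eq_net (W : ℕ → H →L[ℝ] H) (lam eta : ℕ → ℝ) (R : ℕ → H → H) (n : ℕ) (b : H) :
    midNet (Uop W lam eta) (Qop R) (⇑(Uhat1b W lam eta)) (n + 1) b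
      = net (Uop W lam eta) (Qop R) (n + 1) (mkP b b) := by
  induction n with
  | zero => rfl
  | succ n ih => simp only [midNet, net] at ih ⊢; rw [ih]

theorem statement18 (m : ℕ) (hm : 1 ≤ m) [CompleteSpace H]
    (v : HilbertBasis ℕ ℝ H)
    (W : ℕ → H →L[ℝ] H) (beta : ℕ → ℕ → ℝ) (lam eta : ℕ → ℝ)
    (hW : ∀ n, 1 ≤ n → n ≤ m → ∀ p : ℕ, W n (v p) = beta n p • v p)
    (hlam : ∀ n, 1 ≤ n → n ≤ m → 0 < lam n)
    (heta : ∀ n, 1 ≤ n → n ≤ m → 0 < eta n)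
    (hm2 : 2 ≤ m)
    (R : ℕ → H → H)
    (hR : ∀ n, 1 ≤ n → n ≤ m → ∀ x y : H,
      ‖R n x - R n y‖ ^ 2 + ‖(x - R n x) - (y - R n y)‖ ^ 2 ≤ ‖x - y‖ ^ 2)
    (θh : ℕ → ℝ)
    (hθh : ∀ n, 1 ≤ n → n ≤ m - 1 →
      θh n = Real.sqrt (⨆ p : ℕ,
          ((betaC beta 1 n p + betaT beta lam eta 1 n p) ^ 2 + etaP eta 1 n ^ 2))
        + ∑ i ∈ Finset.Icc 2 n, θh (i - 1) * Real.sqrt (aC beta lam eta i n))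
    (hθhm : θh m = Real.sqrt (⨆ p : ℕ, (betaC beta 1 m p + betaT beta lam eta 1 m p) ^ 2)
        + ∑ i ∈ Finset.Icc 2 m, θh (i - 1) * Real.sqrt (aBar beta lam eta i m))
    (α : ℝ) (hα : 1 / 2 ≤ α) (hα1 : α ≤ 1)
    (bhatα : ℝ)
    (hbhatα : bhatα = ⨆ p : ℕ,
      (betaC beta 1 m p + betaT beta lam eta 1 m p - 2 ^ m * (1 - α)) ^ 2)
    (hcond : Real.sqrt bhatα
          - Real.sqrt (⨆ p : ℕ, (betaC beta 1 m p + betaT beta lam eta 1 m p) ^ 2)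
        ≤ 2 ^ m * α - 2 * θh m) :
    ∃ Rm : H → H,
      (∀ x y : H, ‖Rm x - Rm y‖ ≤ ‖x - y‖) ∧
      ∀ b : H,
        R m (Ubar W lam m (midNet (Uop W lam eta) (Qop R) (⇑(Uhat1b W lam eta)) (m - 1) b))
          = (1 - α) • b + α • Rm b := by
  have hα0 : 0 < α := by linarith
  obtain ⟨k, rfl⟩ : ∃ k, m = k + 2 := ⟨m - 2, by omega⟩
  set U := Uop W lam eta with hU
  set N : H → WithLp 2 (H × H) := fun b => net U (Qop R) (k + 2) (mkP b b) with hN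
  have hnet : ∀ b : H,
      R (k + 2) (Ubar W lam (k + 2) (midNet U (Qop R) (⇑(Uhat1b W lam eta)) (k + 2 - 1) b))
        = fstL (N b) := by
    intro b
    have : k + 2 - 1 = k + 1 := rfl
    rw [this, midNet_eq_net]
    rfl
  have main : ∀ x y : H, ‖fstL (N x) - fstL (N y) - (1 - α) • (x - y)‖ ≤ α * ‖x - y‖ := by
    intro x y
    set d := x - y with hd
    set G : ℕ → WithLp 2 (H × H) := fun n =>
      (2 : ℝ) ^ n • (net U (Qop R) n (mkP x x) - net U (Qop R) n (mkP y y)) with hG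
    have hG0 : G 0 = mkP d d := by
      simp only [hG, pow_zero, one_smul]
      rfl
    -- The reflected increment `Sₙ = Gₙ - Uₙ Gₙ₋₁`, component by component.
    have hS1 : ∀ n, 1 ≤ n → n ≤ k + 2 →
        ‖fstL (G n - U n (G (n - 1)))‖ ≤ ‖fstL (U n (G (n - 1)))‖ := by
      intro n h1 hn
      obtain ⟨j, rfl⟩ : ∃ j, n = j + 1 := ⟨n - 1, by omega⟩
      simp only [Nat.add_sub_cancel]
      set p := U (j + 1) (net U (Qop R) j (mkP x x)) with hp
      set q := U (j + 1) (net U (Qop R) j (mkP y y)) with hq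
      have e1 : U (j + 1) (G j) = (2 : ℝ) ^ j • (p - q) := by
        simp only [hG, map_smul, map_sub, hp, hq]
      have e2 : fstL (G (j + 1))
          = (2 : ℝ) ^ j • ((2 : ℝ) • (R (j + 1) (fstL p) - R (j + 1) (fstL q))) := by
        simp only [hG, map_smul, map_sub, smul_smul, pow_succ]
        rfl
      rw [map_sub, e2, e1, map_smul, ← smul_sub, norm_smul, norm_smul, map_sub]
      refine mul_le_mul_of_nonneg_left (norm_reflect_le ?_) (norm_nonneg _)
      have := hR (j + 1) h1 hn (fstL p) (fstL q)
      rwa [sub_sub_sub_comm] at this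
    have hS2 : ∀ n, 1 ≤ n → sndL (G n - U n (G (n - 1))) = sndL (U n (G (n - 1))) := by
      intro n h1
      obtain ⟨j, rfl⟩ : ∃ j, n = j + 1 := ⟨n - 1, by omega⟩
      simp only [Nat.add_sub_cancel]
      have e : sndL (G (j + 1)) = (2 : ℝ) • sndL (U (j + 1) (G j)) := by
        simp only [hG, map_smul, map_sub, smul_smul, pow_succ']
        rfl
      rw [map_sub, e, two_smul, add_sub_cancel_right]
    have hS : ∀ n, 1 ≤ n → n ≤ k + 2 → ‖G n - U n (G (n - 1))‖ ≤ ‖U n (G (n - 1))‖ := by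
      intro n h1 hn
      refine le_of_sq_le_sq ?_ (norm_nonneg _)
      rw [normP_sq, normP_sq (U n _), hS2 n h1]
      have := pow_le_pow_left₀ (norm_nonneg _) (hS1 n h1 hn) 2
      linarith
    have hV : ∀ n, 1 ≤ n → n ≤ k + 1 → ‖U n (G (n - 1))‖ ≤ θh n * ‖d‖ := by
      intro n
      induction n using Nat.strong_induction_on with
      | _ n ih =>
        intro h1 hn
        rw [unfold_rec U G h1, hθh n h1 hn, hG0, add_mul, Finset.sum_mul]
        refine (norm_add_le _ _).trans (add_le_add
          (norm_opComp_diag_le v W beta lam eta hW h1 (by omega) d)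
          ((norm_sum_le _ _).trans (Finset.sum_le_sum fun i hi => ?_)))
        rw [Finset.mem_Icc] at hi
        refine (norm_opComp_le v W beta lam eta hW (by omega) hi.2 (by omega) _).trans ?_
        rw [mul_comm, mul_right_comm]
        exact mul_le_mul_of_nonneg_right ((hS (i - 1) (by omega) (by omega)).trans
          (ih (i - 1) (by omega) (by omega) (by omega))) (Real.sqrt_nonneg _)
    set T₂ := ∑ i ∈ Finset.Icc 2 (k + 2), θh (i - 1) * Real.sqrt (aBar beta lam eta i (k + 2))
    have hsum : ‖fstL (∑ i ∈ Finset.Icc 2 (k + 2),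
        opComp U i (k + 2) (G (i - 1) - U (i - 1) (G (i - 1 - 1))))‖ ≤ T₂ * ‖d‖ := by
      rw [map_sum, Finset.sum_mul]
      refine (norm_sum_le _ _).trans (Finset.sum_le_sum fun i hi => ?_)
      rw [Finset.mem_Icc] at hi
      refine (norm_fst_opComp_le v W beta lam eta hW (by omega) hi.2 le_rfl _).trans ?_
      rw [mul_comm, mul_right_comm]
      exact mul_le_mul_of_nonneg_right ((hS (i - 1) (by omega) (by omega)).trans
        (hV (i - 1) (by omega) (by omega))) (Real.sqrt_nonneg _)
    have hexp := congrArg fstL (unfold_rec U G (n := k + 2) (by omega))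
    rw [map_add, hG0] at hexp
    have hlead := norm_fst_opComp_diag_sub_le v W beta lam eta hW (n := k + 2) (by omega) le_rfl
      (2 ^ (k + 2) * (1 - α)) d
    have hlead0 := norm_fst_opComp_diag_sub_le v W beta lam eta hW (n := k + 2) (by omega) le_rfl
      0 d
    simp only [sub_zero, zero_smul] at hlead0
    rw [← hbhatα] at hlead
    rw [← hU] at hlead hlead0
    have hVm : ‖fstL (U (k + 2) (G (k + 2 - 1)))‖ ≤ θh (k + 2) * ‖d‖ := by
      rw [hexp, hθhm, add_mul]
      exact (norm_add_le _ _).trans (add_le_add hlead0 hsum)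
    have hSm := (hS1 (k + 2) (by omega) le_rfl).trans hVm
    have hdecomp : (2 : ℝ) ^ (k + 2) • (fstL (N x) - fstL (N y) - (1 - α) • d)
        = (fstL (opComp U 1 (k + 2) (mkP d d)) - ((2 : ℝ) ^ (k + 2) * (1 - α)) • d)
          + fstL (∑ i ∈ Finset.Icc 2 (k + 2),
              opComp U i (k + 2) (G (i - 1) - U (i - 1) (G (i - 1 - 1))))
          + fstL (G (k + 2) - U (k + 2) (G (k + 2 - 1))) := by
      have : fstL (G (k + 2)) = (2 : ℝ) ^ (k + 2) • (fstL (N x) - fstL (N y)) := by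
        simp only [hG, hN, map_smul, map_sub]
      rw [map_sub, this, hexp, smul_sub, smul_smul]
      abel
    have hpow : (0 : ℝ) < 2 ^ (k + 2) := by positivity
    refine le_of_mul_le_mul_left ?_ hpow
    have hn := norm_smul ((2 : ℝ) ^ (k + 2)) (fstL (N x) - fstL (N y) - (1 - α) • d)
    rw [Real.norm_of_nonneg hpow.le] at hn
    rw [← hn, hdecomp]
    refine (norm_add₃_le.trans (add_le_add (add_le_add hlead hsum) hSm)).trans ?_
    rw [← add_mul, ← add_mul, ← mul_assoc]
    refine mul_le_mul_of_nonneg_right ?_ (norm_nonneg _)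
    linarith
  refine ⟨fun b => α⁻¹ • (fstL (N b) - (1 - α) • b), fun x y => ?_, fun b => ?_⟩
  · rw [← smul_sub, norm_smul, norm_inv, Real.norm_of_nonneg hα0.le, inv_mul_le_iff₀ hα0,
      sub_sub_sub_comm, ← smul_sub]
    exact main x y
  · rw [hnet, smul_inv_smul₀ hα0.ne', add_sub_cancel]
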